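/- Let C be a 2D elasticity tensor. Then in dimension 2 the deviatoric parts of the dilatation and Voigt tensors coincide: d(C) − ½(tr d(C))·δ = v(C) − ½(tr v(C))·δ. Moreover, for d' = d(C) − ½(tr d(C))·δ one has the fourth-order tensor identity δ i j · d' k l + d' i j · δ k l = ½(δ i k · d' j l + δ i l · d' j k + d' i k · δ j l + d' i l · δ j k) for all indices i, j, k, l. -/

import Mathlib

open Finset

noncomputable section

/-- A fourth-order tensor on `ℝ²`. -/
abbrev Tens4 := Fin 2 → Fin 2 → Fin 2 → Fin 2 → ℝ

/-- Kronecker delta on `Fin 2`. -/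
def kdelta (i j : Fin 2) : ℝ := if i = j then 1 else 0

/-- The isotropic fourth-order tensor `J`. -/
def Jten (i j k l : Fin 2) : ℝ :=
  (kdelta i k * kdelta j l + kdelta i l * kdelta j k) / 2 - kdelta i j * kdelta k l / 2

/-- A 2D elasticity tensor: minor and major index symmetries. -/
def IsElas (C : Tens4) : Prop :=
  (∀ i j k l, C i j k l = C j i k l) ∧ (∀ i j k l, C i j k l = C i j l k) ∧
    (∀ i j k l, C i j k l = C k l i j)

/-- Dilatation tensor `d(C)ᵢⱼ = Σₖ C k k i j`. -/
def dil (C : Tens4) (i j : Fin 2) : ℝ := ∑ k, C k k i j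

/-- Voigt tensor `v(C)ᵢⱼ = Σₖ C k i k j`. -/
def voigt (C : Tens4) (i j : Fin 2) : ℝ := ∑ k, C k i k j

/-- Shear modulus `μ(C)`. -/
def muC (C : Tens4) : ℝ := (2 * ∑ i, voigt C i i - ∑ i, dil C i i) / 8

/-- 2D bulk modulus `κ(C)`. -/
def kappaC (C : Tens4) : ℝ := (∑ i, dil C i i) / 4

/-- Deviatoric part `d'(C)` of the dilatation tensor. -/
def devC (C : Tens4) (i j : Fin 2) : ℝ := dil C i j - (∑ k, dil C k k) / 2 * kdelta i j

/-- Harmonic (fourth-order) part `H(C)` of the elasticity tensor. -/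
def harmC (C : Tens4) (i j k l : Fin 2) : ℝ :=
  C i j k l - 2 * muC C * Jten i j k l - kappaC C * kdelta i j * kdelta k l
    - (kdelta i j * devC C k l + devC C i j * kdelta k l) / 2

/-- A 2D harmonic fourth-order tensor: totally symmetric (invariant under all
permutations of its four indices) and traceless. -/
def IsHarmonic (H : Tens4) : Prop :=
  (∀ (σ : Equiv.Perm (Fin 4)) (v : Fin 4 → Fin 2),
      H (v (σ 0)) (v (σ 1)) (v (σ 2)) (v (σ 3)) = H (v 0) (v 1) (v 2) (v 3)) ∧
    (∀ i j : Fin 2, ∑ k, H k k i j = 0)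

/-!
A fourth-order tensor on `ℝ²` that is antisymmetric in `(j, k)` and in `(i, l)` is a multiple of
`εᵢₗ εⱼₖ = δᵢⱼ δₖₗ - δᵢₖ δⱼₗ`. If `T` is unchanged by reversing its indices, then
`Tᵢⱼₖₗ - Tᵢₖⱼₗ` is such a multiple. For `T = C`, contracting `i` with `j` shows that
`d(C) - v(C)` is spherical. For `T = δ ⊗ a + a ⊗ δ` with `a` symmetric, the factor is `tr a`, so
`T` is totally symmetric when `a` is also traceless.
-/

/-- Invariance of a fourth-order tensor under reversal of the order of its indices: the part of
the elastic symmetries that makes `Tᵢⱼₖₗ - Tᵢₖⱼₗ` antisymmetric in `(i, l)`. -/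
def IsReversalSymm (T : Tens4) : Prop :=
  ∀ i j k l, T i j k l = T l k j i

theorem IsElas.isReversalSymm {C : Tens4} (hC : IsElas C) : IsReversalSymm C := by
  obtain ⟨minor_left, minor_right, major⟩ := hC
  intro i j k l
  rw [major i j k l, minor_left k l i j, minor_right l k i j]

theorem IsElas.dil_comm {C : Tens4} (hC : IsElas C) (i j : Fin 2) : dil C i j = dil C j i :=
  Finset.sum_congr rfl fun k _ => hC.2.1 k k i j

theorem kdelta_self (i : Fin 2) : kdelta i i = 1 :=
  if_pos rfl

theorem kdelta_comm (i j : Fin 2) : kdelta i j = kdelta j i := by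
  simp only [kdelta, eq_comm]

theorem sum_kdelta_mul_kdelta (i j : Fin 2) :
    ∑ k, kdelta k i * kdelta k j = kdelta i j := by
  simp only [kdelta, ite_mul, one_mul, zero_mul, Finset.sum_ite_eq', Finset.mem_univ, if_true]

theorem IsReversalSymm.sub_swap_middle {T : Tens4} (hT : IsReversalSymm T) (i j k l : Fin 2) :
    T i j k l - T i k j l
      = (T 0 0 1 1 - T 0 1 0 1) * (kdelta i j * kdelta k l - kdelta i k * kdelta j l) := by
  obtain rfl | hjk := eq_or_ne j k
  · ring
  obtain rfl | hil := eq_or_ne i l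
  · rw [hT i j k i, kdelta_comm k i, kdelta_comm j i]
    ring
  have h_rev : T 1 1 0 0 = T 0 0 1 1 := hT 1 1 0 0
  have h_rev' : T 1 0 1 0 = T 0 1 0 1 := hT 1 0 1 0
  fin_cases i <;> fin_cases j <;> fin_cases k <;> fin_cases l <;> simp_all [kdelta]

theorem IsReversalSymm.dil_eq_voigt_add {C : Tens4} (hC : IsReversalSymm C) (i j : Fin 2) :
    dil C i j = voigt C i j + (C 0 0 1 1 - C 0 1 0 1) * kdelta i j := by
  have h_contract : ∑ k, (kdelta k k * kdelta i j - kdelta k i * kdelta k j) = kdelta i j := by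
    rw [Finset.sum_sub_distrib, sum_kdelta_mul_kdelta, Fin.sum_univ_two, kdelta_self, kdelta_self]
    ring
  rw [← sub_eq_iff_eq_add']
  calc dil C i j - voigt C i j = ∑ k, (C k k i j - C k i k j) :=
        (Finset.sum_sub_distrib _ _).symm
    _ = (C 0 0 1 1 - C 0 1 0 1)
          * ∑ k, (kdelta k k * kdelta i j - kdelta k i * kdelta k j) := by
        rw [Finset.mul_sum]
        exact Finset.sum_congr rfl fun k _ => hC.sub_swap_middle k k i j
    _ = (C 0 0 1 1 - C 0 1 0 1) * kdelta i j := by rw [h_contract]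

/-- The deviatoric part `a - ½ (tr a) δ` of a second-order tensor on `ℝ²`; `devC C` is the
deviatoric part of `dil C`. -/
def deviator (a : Fin 2 → Fin 2 → ℝ) (i j : Fin 2) : ℝ :=
  a i j - (∑ k, a k k) / 2 * kdelta i j

theorem sum_deviator_self (a : Fin 2 → Fin 2 → ℝ) : ∑ k, deviator a k k = 0 := by
  simp only [deviator, kdelta_self, Fin.sum_univ_two]
  ring

theorem deviator_comm {a : Fin 2 → Fin 2 → ℝ} (ha : ∀ i j, a i j = a j i) (i j : Fin 2) :
    deviator a i j = deviator a j i := by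
  rw [deviator, deviator, ha i j, kdelta_comm i j]

theorem deviator_eq_of_eq_add_mul_kdelta {a b : Fin 2 → Fin 2 → ℝ} {s : ℝ}
    (h : ∀ i j, a i j = b i j + s * kdelta i j) (i j : Fin 2) :
    deviator a i j = deviator b i j := by
  simp only [deviator, h, kdelta_self, Fin.sum_univ_two]
  ring

/-- The tensor `δ ⊗ a + a ⊗ δ`, in which the deviator enters the harmonic decomposition of an
elasticity tensor. -/
def kdeltaSymmProd (a : Fin 2 → Fin 2 → ℝ) : Tens4 := fun i j k l =>
  kdelta i j * a k l + a i j * kdelta k l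

theorem isReversalSymm_kdeltaSymmProd {a : Fin 2 → Fin 2 → ℝ} (ha : ∀ i j, a i j = a j i) :
    IsReversalSymm (kdeltaSymmProd a) := by
  intro i j k l
  simp only [kdeltaSymmProd]
  rw [kdelta_comm i j, kdelta_comm k l, ha i j, ha k l]
  ring

theorem kdeltaSymmProd_swap_middle {a : Fin 2 → Fin 2 → ℝ} (ha : ∀ i j, a i j = a j i)
    (ha_trace : ∑ k, a k k = 0) (i j k l : Fin 2) :
    kdeltaSymmProd a i j k l = kdeltaSymmProd a i k j l := by
  have h_factor : kdeltaSymmProd a 0 0 1 1 - kdeltaSymmProd a 0 1 0 1 = 0 := by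
    rw [← ha_trace, Fin.sum_univ_two]
    simp [kdeltaSymmProd, kdelta, add_comm]
  rw [← sub_eq_zero, (isReversalSymm_kdeltaSymmProd ha).sub_swap_middle, h_factor, zero_mul]

theorem kdeltaSymmProd_eq_bar_product {a : Fin 2 → Fin 2 → ℝ} (ha : ∀ i j, a i j = a j i)
    (ha_trace : ∑ k, a k k = 0) (i j k l : Fin 2) :
    kdelta i j * a k l + a i j * kdelta k l
      = (kdelta i k * a j l + kdelta i l * a j k
          + a i k * kdelta j l + a i l * kdelta j k) / 2 := by
  have h_jk : kdelta i j * a k l + a i j * kdelta k l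
      = kdelta i k * a j l + a i k * kdelta j l :=
    kdeltaSymmProd_swap_middle ha ha_trace i j k l
  have h_jl : kdelta i j * a l k + a i j * kdelta l k
      = kdelta i l * a j k + a i l * kdelta j k :=
    kdeltaSymmProd_swap_middle ha ha_trace i j l k
  rw [ha l k, kdelta_comm l k] at h_jl
  linarith

theorem dev_dil_eq_dev_voigt_and_bar_product_general (C : Tens4) (hC : IsReversalSymm C)
    (hdil : ∀ i j, dil C i j = dil C j i) :
    (∀ i j, dil C i j - (∑ k, dil C k k) / 2 * kdelta i j
        = voigt C i j - (∑ k, voigt C k k) / 2 * kdelta i j) ∧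
      (∀ i j k l, kdelta i j * devC C k l + devC C i j * kdelta k l
        = (kdelta i k * devC C j l + kdelta i l * devC C j k
            + devC C i k * kdelta j l + devC C i l * kdelta j k) / 2) :=
  ⟨deviator_eq_of_eq_add_mul_kdelta hC.dil_eq_voigt_add,
    kdeltaSymmProd_eq_bar_product (deviator_comm hdil) (sum_deviator_self (dil C))⟩

/-- In 2D, the deviatoric parts of the dilatation and Voigt tensors
coincide, and `δ ⊗ d' + d' ⊗ δ = δ ⊗̄ d' + d' ⊗̄ δ` for the deviator `d' = d'(C)`. -/
theorem dev_dil_eq_dev_voigt_and_bar_product (C : Tens4) (hC : IsElas C) :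
    (∀ i j, dil C i j - (∑ k, dil C k k) / 2 * kdelta i j
        = voigt C i j - (∑ k, voigt C k k) / 2 * kdelta i j) ∧
      (∀ i j k l, kdelta i j * devC C k l + devC C i j * kdelta k l
        = (kdelta i k * devC C j l + kdelta i l * devC C j k
            + devC C i k * kdelta j l + devC C i l * kdelta j k) / 2) :=
  dev_dil_eq_dev_voigt_and_bar_product_general C hC.isReversalSymm hC.dil_comm
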